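/- Let D be an ADF and let w be a strongly admissible interpretation of D. Then there exists m ∈ ℕ such that w ≤_i Γ_D^m(v_u), where Γ_D^m denotes the m-fold iterate of the characteristic operator applied to the trivial interpretation. -/

import Mathlib

/-!
The iterates `Γ^m(v_u)` increase with `m`, because `Γ` is monotone for the information order and
`v_u` is its bottom (`ile_iterate`). A derivation of strong acceptability or deniability is a
well-founded tree. By induction on it (`SJrel.exists_iterate`), each parent in the witnessing set
`P` has its `w`-value reached by some iterate; as `P` is finite, one iterate `Γ^M(v_u)` lies above
`w|_P`, so the acceptance condition is already settled there and `Γ^(M+1)(v_u)` has the right value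
at the argument. Neither the excluded set nor `S` plays a role beyond this. A maximum over the
finitely many arguments then gives one iterate above all of `w`.
-/

/-- Three truth values: true, false, undecided. -/
inductive TV : Type
  | t | f | u
deriving DecidableEq, Repr

/-- The information order on truth values: u <_i t and u <_i f. -/
def TV.ile (x y : TV) : Prop := x = TV.u ∨ x = y

/-- The information order on interpretations, extended pointwise. -/
def ILE {A : Type*} (v w : A → TV) : Prop := ∀ a, TV.ile (v a) (w a)

/-- An abstract dialectical framework on a set of arguments `A`:
each argument `a` has an acceptance condition `C a : (A → Bool) → Bool`. -/
structure ADF (A : Type*) where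
  C : A → (A → Bool) → Bool

/-- The trivial interpretation mapping every argument to undecided. -/
def trivialInterp (A : Type*) : A → TV := fun _ => TV.u

/-- The parents of `a` are the arguments on which its acceptance condition depends. -/
def ADF.parents {A : Type*} [DecidableEq A] (D : ADF A) (a : A) : Set A :=
  {b | ∃ w : A → Bool, D.C a w ≠ D.C a (Function.update w b (!w b))}

/-- A two-valued assignment `w` completes a three-valued interpretation `v`. -/
def Completes {A : Type*} (w : A → Bool) (v : A → TV) : Prop :=
  ∀ b, (v b = TV.t → w b = true) ∧ (v b = TV.f → w b = false)

/-- `φ` is irrefutable under `v`: every completion of `v` makes `φ` true. -/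
def Irrefutable {A : Type*} (φ : (A → Bool) → Bool) (v : A → TV) : Prop :=
  ∀ w : A → Bool, Completes w v → φ w = true

/-- `φ` is unsatisfiable under `v`: every completion of `v` makes `φ` false. -/
def Unsat {A : Type*} (φ : (A → Bool) → Bool) (v : A → TV) : Prop :=
  ∀ w : A → Bool, Completes w v → φ w = false

open Classical in
/-- The characteristic operator Γ_D of an ADF. -/
noncomputable def Gamma {A : Type*} (D : ADF A) (v : A → TV) : A → TV := fun a =>
  if Irrefutable (D.C a) v then TV.t
  else if Unsat (D.C a) v then TV.f
  else TV.u

open Classical in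
/-- `v|_P`: agrees with `v` on `P` and is undecided elsewhere. -/
noncomputable def restrictTV {A : Type*} (v : A → TV) (P : Set A) : A → TV :=
  fun b => if b ∈ P then v b else TV.u

/-- Strong acceptability/deniability of an argument with respect to interpretation `v`
and set `S`, relative to an excluded set `E` (the first index). An argument `a` with
`v a = t` (resp. `v a = f`) is strongly acceptable (resp. strongly deniable) iff there is
`P ⊆ (parents a ∩ S) \ E` with `φ_a^{v|_P}` irrefutable (resp. unsatisfiable) and every
`p ∈ P` strongly acceptable/deniable relative to `E ∪ {p}`. -/
inductive SJrel {A : Type*} [DecidableEq A] (D : ADF A) (v : A → TV) (S : Set A) :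
    Set A → A → Prop
  | acc (E : Set A) (a : A) (P : Set A)
      (ha : v a = TV.t)
      (hP : P ⊆ (D.parents a ∩ S) \ E)
      (hirr : Irrefutable (D.C a) (restrictTV v P))
      (hrec : ∀ p ∈ P, SJrel D v S (E ∪ {p}) p) : SJrel D v S E a
  | den (E : Set A) (a : A) (P : Set A)
      (ha : v a = TV.f)
      (hP : P ⊆ (D.parents a ∩ S) \ E)
      (hunsat : Unsat (D.C a) (restrictTV v P))
      (hrec : ∀ p ∈ P, SJrel D v S (E ∪ {p}) p) : SJrel D v S E a

/-- `a` is strongly acceptable/deniable w.r.t. `v` and `S`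
(i.e., relative to the excluded set `{a}`). -/
def StronglyJustified {A : Type*} [DecidableEq A] (D : ADF A) (v : A → TV)
    (S : Set A) (a : A) : Prop :=
  SJrel D v S {a} a

/-- `S` is a least set for `a` with respect to `v`. -/
def LeastSet {A : Type*} [DecidableEq A] (D : ADF A) (v : A → TV)
    (a : A) (S : Set A) : Prop :=
  StronglyJustified D v S a ∧
  ∀ S' : Set A, S'.ncard < S.ncard → ¬ StronglyJustified D v S' a

/-- An interpretation is strongly admissible iff every argument assigned `t`/`f`
is strongly acceptable/deniable w.r.t. `v` and some set `S`. -/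
def StronglyAdmissible {A : Type*} [DecidableEq A] (D : ADF A) (v : A → TV) : Prop :=
  ∀ a : A, v a ≠ TV.u → ∃ S : Set A, StronglyJustified D v S a

/-- `g` is the grounded interpretation of `D`: the least fixed point of `Γ_D`. -/
def IsGrounded {A : Type*} (D : ADF A) (g : A → TV) : Prop :=
  Gamma D g = g ∧ ∀ w : A → TV, Gamma D w = w → ILE g w

/-- An interpretation is admissible iff `v ≤_i Γ_D(v)`. -/
def Admissible {A : Type*} (D : ADF A) (v : A → TV) : Prop :=
  ILE v (Gamma D v)

/-- An interpretation is conflict-free. -/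
def ConflictFree {A : Type*} (D : ADF A) (v : A → TV) : Prop :=
  ∀ a : A, (v a = TV.t → ∃ w : A → Bool, Completes w v ∧ D.C a w = true) ∧
           (v a = TV.f → Unsat (D.C a) v)

/-- The join of two interpretations: take `v`'s value where defined, else `w`'s. -/
def joinI {A : Type*} (v w : A → TV) : A → TV :=
  fun a => if v a = TV.u then w a else v a

theorem TV.ile_trans {x y z : TV} (h : TV.ile x y) (h' : TV.ile y z) : TV.ile x z := by
  rcases h with h | rfl
  · exact Or.inl h
  · exact h'

theorem Completes.anti {A : Type*} {v v' : A → TV} (h : ILE v v') {x : A → Bool}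
    (hx : Completes x v') : Completes x v := by
  intro b
  rcases h b with hb | hb
  · simp [hb]
  · rw [hb]
    exact hx b

theorem exists_completes {A : Type*} (v : A → TV) : ∃ x : A → Bool, Completes x v :=
  ⟨fun b => decide (v b = TV.t), fun b => by constructor <;> intro h <;> simp [h]⟩

theorem Gamma_eq_t {A : Type*} {D : ADF A} {v : A → TV} {a : A}
    (h : Irrefutable (D.C a) v) : Gamma D v a = TV.t := by
  simp [Gamma, h]

/-- Unsatisfiability excludes irrefutability, since every interpretation has a completion; hence
the order of the two tests in `Gamma` is immaterial. -/
theorem Gamma_eq_f {A : Type*} {D : ADF A} {v : A → TV} {a : A}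
    (h : Unsat (D.C a) v) : Gamma D v a = TV.f := by
  have hn : ¬ Irrefutable (D.C a) v := by
    intro h'
    obtain ⟨x, hx⟩ := exists_completes v
    have h1 := h x hx
    rw [h' x hx] at h1
    cases h1
  simp [Gamma, h, hn]

theorem Gamma_mono {A : Type*} (D : ADF A) {v v' : A → TV} (h : ILE v v') :
    ILE (Gamma D v) (Gamma D v') := by
  intro a
  by_cases h1 : Irrefutable (D.C a) v
  · have h1' : Irrefutable (D.C a) v' := fun x hx => h1 x (hx.anti h)
    exact Or.inr ((Gamma_eq_t h1).trans (Gamma_eq_t h1').symm)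
  · by_cases h2 : Unsat (D.C a) v
    · have h2' : Unsat (D.C a) v' := fun x hx => h2 x (hx.anti h)
      exact Or.inr ((Gamma_eq_f h2).trans (Gamma_eq_f h2').symm)
    · exact Or.inl (by simp [Gamma, h1, h2])

theorem ile_iterate_succ {A : Type*} (D : ADF A) (m : ℕ) :
    ILE ((Gamma D)^[m] (trivialInterp A)) ((Gamma D)^[m + 1] (trivialInterp A)) := by
  induction m with
  | zero => exact fun a => Or.inl rfl
  | succ k ih =>
    rw [Function.iterate_succ_apply', Function.iterate_succ_apply' (Gamma D) (k + 1)]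
    exact Gamma_mono D ih

theorem ile_iterate {A : Type*} (D : ADF A) {m n : ℕ} (h : m ≤ n) :
    ILE ((Gamma D)^[m] (trivialInterp A)) ((Gamma D)^[n] (trivialInterp A)) := by
  induction n, h using Nat.le_induction with
  | base => exact fun a => Or.inr rfl
  | succ k _ ih => exact fun a => TV.ile_trans (ih a) (ile_iterate_succ D k a)

/-- Finitely many arguments, each reached by some iterate, are reached by a common one. -/
theorem exists_iterate_uniform {A : Type*} [Fintype A] (D : ADF A) (v : A → TV)
    (h : ∀ a, ∃ m : ℕ, TV.ile (v a) ((Gamma D)^[m] (trivialInterp A) a)) :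
    ∃ m : ℕ, ILE v ((Gamma D)^[m] (trivialInterp A)) := by
  choose m hm using h
  exact ⟨Finset.univ.sup m, fun a =>
    TV.ile_trans (hm a) (ile_iterate D (Finset.le_sup (Finset.mem_univ a)) a)⟩

theorem exists_iterate_restrict {A : Type*} [Fintype A] (D : ADF A) (v : A → TV) (P : Set A)
    (h : ∀ p ∈ P, ∃ m : ℕ, TV.ile (v p) ((Gamma D)^[m] (trivialInterp A) p)) :
    ∃ m : ℕ, ILE (restrictTV v P) ((Gamma D)^[m] (trivialInterp A)) := by
  refine exists_iterate_uniform D _ fun a => ?_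
  by_cases ha : a ∈ P
  · simpa [restrictTV, ha] using h a ha
  · exact ⟨0, Or.inl (by simp [restrictTV, ha])⟩

theorem SJrel.exists_iterate {A : Type*} [Fintype A] [DecidableEq A] {D : ADF A} {v : A → TV}
    {S E : Set A} {a : A} (h : SJrel D v S E a) :
    ∃ m : ℕ, TV.ile (v a) ((Gamma D)^[m] (trivialInterp A) a) := by
  induction h with
  | acc E a P ha _ hirr _ ih =>
    obtain ⟨m, hm⟩ := exists_iterate_restrict D v P ih
    refine ⟨m + 1, Or.inr ?_⟩
    rw [Function.iterate_succ_apply', ha, Gamma_eq_t fun x hx => hirr x (hx.anti hm)]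
  | den E a P ha _ hunsat _ ih =>
    obtain ⟨m, hm⟩ := exists_iterate_restrict D v P ih
    refine ⟨m + 1, Or.inr ?_⟩
    rw [Function.iterate_succ_apply', ha, Gamma_eq_f fun x hx => hunsat x (hx.anti hm)]

/-- Every strongly admissible interpretation is bounded by some
iterate of Γ_D applied to the trivial interpretation. -/
theorem strongly_admissible_below_iterate {A : Type*} [Fintype A] [DecidableEq A]
    (D : ADF A) (w : A → TV) (hw : StronglyAdmissible D w) :
    ∃ m : ℕ, ILE w ((Gamma D)^[m] (trivialInterp A)) := by
  refine exists_iterate_uniform D w fun a => ?_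
  by_cases ha : w a = TV.u
  · exact ⟨0, Or.inl ha⟩
  · obtain ⟨S, hS⟩ := hw a ha
    exact SJrel.exists_iterate hS
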